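/- arXiv:2308.12897 — 5 statements merged into one kernel-verified Lean document; each statement's English description precedes it below -/
import Mathlib

section
/- Let 0 → C_k → C_{k−1} → ⋯ → C_1 → C_0 → 0 be an exact sequence of finitely generated free ℤ-modules, and let (f_i : C_i → C_i)_{i=0,…,k} be a chain endomorphism, i.e. a family of ℤ-linear maps commuting with the differentials. Then the alternating products of determinants agree: ∏_{i even} det(f_i) = ∏_{i odd} det(f_i). -/
/- An exact sequence `0 → C_k → C_{k−1} → ⋯ → C_1 → C_0 → 0` of finitely generated free
`ℤ`-modules is encoded by a family `C : ℕ → Type` (only the indices `0, …, k` are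
relevant), with differentials `d i : C (i+1) →ₗ[ℤ] C i` (the paper's `d_{i+1}`),
injective at the top (`d (k-1) : C k → C (k-1)`), surjective at the bottom
(`d 0 : C 1 → C 0`), and exact at every interior module.  A chain endomorphism is a
family `f i : C i →ₗ[ℤ] C i` commuting with the differentials. -/

theorem aux_ker_le {R : Type*} [CommRing R] [IsDomain R] [IsPrincipalIdealRing R] 
    {M N : Type*} [AddCommGroup M] [Module R M] [AddCommGroup N] [Module R N]
    (g : M →ₗ[R] N) (a : M →ₗ[R] M) (b : N →ₗ[R] N) (h : g ∘ₗ a = b ∘ₗ g) :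
    ∀ x ∈ LinearMap.ker g, a x ∈ LinearMap.ker g := by
  intro x hx
  have := LinearMap.congr_fun h x
  simp only [LinearMap.comp_apply] at this
  rw [LinearMap.mem_ker] at hx ⊢
  rw [this, hx, map_zero]

theorem aux_range_le {R : Type*} [CommRing R] [IsDomain R] [IsPrincipalIdealRing R] 
    {M N : Type*} [AddCommGroup M] [Module R M] [AddCommGroup N] [Module R N]
    (g : M →ₗ[R] N) (a : M →ₗ[R] M) (b : N →ₗ[R] N) (h : g ∘ₗ a = b ∘ₗ g) :
    ∀ x ∈ LinearMap.range g, b x ∈ LinearMap.range g := by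
  rintro _ ⟨x, rfl⟩
  exact ⟨a x, LinearMap.congr_fun h x⟩

theorem aux_det {R : Type*} [CommRing R] [IsDomain R] [IsPrincipalIdealRing R] 
    {M N : Type*} [AddCommGroup M] [Module R M] [AddCommGroup N] [Module R N]
    [Module.Free R M] [Module.Finite R M] [Module.Free R N] [Module.Finite R N]
    (g : M →ₗ[R] N) (a : M →ₗ[R] M) (b : N →ₗ[R] N) (h : g ∘ₗ a = b ∘ₗ g) :
    LinearMap.det a = LinearMap.det (a.restrict (aux_ker_le g a b h)) *
      LinearMap.det (b.restrict (aux_range_le g a b h)) := by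
  have e := g.quotKerEquivRange
  have : Module.Free R (M ⧸ LinearMap.ker g) := Module.Free.of_equiv e.symm
  rw [LinearMap.det_eq_det_mul_det (LinearMap.ker g) a (aux_ker_le g a b h)]
  congr 1
  rw [← LinearMap.det_conj _ g.quotKerEquivRange]
  congr 1
  ext ⟨_, x, rfl⟩
  have hx : g.quotKerEquivRange.symm ⟨g x, x, rfl⟩ = Submodule.Quotient.mk x := by
    rw [LinearEquiv.symm_apply_eq]; rfl
  have := LinearMap.congr_fun h x
  simp only [LinearMap.comp_apply, LinearEquiv.coe_coe, hx]
  exact this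

theorem aux_restrict {R : Type*} [CommRing R] [IsDomain R] [IsPrincipalIdealRing R] 
    {N : Type*} [AddCommGroup N] [Module R N] (b : N →ₗ[R] N)
    (p q : Submodule R N) (hpq : p = q) (hp : ∀ x ∈ p, b x ∈ p) (hq : ∀ x ∈ q, b x ∈ q) :
    LinearMap.det (b.restrict hp) = LinearMap.det (b.restrict hq) := by
  subst hpq; rfl

theorem aux_top {R : Type*} [CommRing R] [IsDomain R] [IsPrincipalIdealRing R] 
    {N : Type*} [AddCommGroup N] [Module R N] (b : N →ₗ[R] N)
    (p : Submodule R N) (hpt : p = ⊤) (hp : ∀ x ∈ p, b x ∈ p) :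
    LinearMap.det (b.restrict hp) = LinearMap.det b := by
  subst hpt
  rw [← LinearMap.det_conj _ (Submodule.topEquiv (R := R) (M := N))]
  rfl

theorem aux_bot {R : Type*} [CommRing R] [IsDomain R] [IsPrincipalIdealRing R] 
    {N : Type*} [AddCommGroup N] [Module R N] (b : N →ₗ[R] N)
    (p : Submodule R N) (hpt : p = ⊥) (hp : ∀ x ∈ p, b x ∈ p) :
    LinearMap.det (b.restrict hp) = 1 := by
  subst hpt
  have : b.restrict hp = LinearMap.id := by
    ext x
  rw [this, LinearMap.det_id]

theorem aux_prod {R : Type*} [CommRing R] [IsDomain R] [IsPrincipalIdealRing R] 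
    (k : ℕ) (u z : ℕ → R) (h0 : u 0 = z 0)
    (hs : ∀ i, i < k → u (i + 1) = z (i + 1) * z i) (n : ℕ) (hn : n ≤ k) :
    (Even n → ∏ i ∈ (Finset.range (n + 1)).filter (fun i => Even i), u i =
      z n * ∏ i ∈ (Finset.range (n + 1)).filter (fun i => Odd i), u i) ∧
    (Odd n → ∏ i ∈ (Finset.range (n + 1)).filter (fun i => Odd i), u i =
      z n * ∏ i ∈ (Finset.range (n + 1)).filter (fun i => Even i), u i) := by
  simp only [Finset.prod_filter]
  induction n with
  | zero => simp [h0]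
  | succ n ih =>
    obtain ⟨h1, h2⟩ := ih (by omega)
    rw [Finset.prod_range_succ _ (n + 1), Finset.prod_range_succ _ (n + 1), hs n (by omega)]
    constructor
    · intro he
      have ho : Odd n := by grind
      have hno : ¬ Odd (n + 1) := by grind
      rw [if_pos he, if_neg hno, h2 ho]; ring
    · intro he
      have ho : Even n := by grind
      have hno : ¬ Even (n + 1) := by grind
      rw [if_pos he, if_neg hno, h1 ho]; ring

theorem aux_main {R : Type*} [CommRing R] [IsDomain R] [IsPrincipalIdealRing R] (k : ℕ) (hk : 1 ≤ k)
    (C : ℕ → Type*) [∀ i, AddCommGroup (C i)] [∀ i, Module R (C i)]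
    (hfree : ∀ i, i ≤ k → Module.Free R (C i))
    (hfin : ∀ i, i ≤ k → Module.Finite R (C i))
    (d : ∀ i, C (i + 1) →ₗ[R] C i)
    (hinj : Function.Injective (d (k - 1)))
    (hsurj : Function.Surjective (d 0))
    (hexact : ∀ i, i + 1 < k → Function.Exact (d (i + 1)) (d i))
    (f : ∀ i, C i →ₗ[R] C i)
    (hcomm : ∀ i, i < k → (d i) ∘ₗ (f (i + 1)) = (f i) ∘ₗ (d i)) :
    ∏ i ∈ (Finset.range (k + 1)).filter (fun i => Even i), LinearMap.det (f i) =
      ∏ i ∈ (Finset.range (k + 1)).filter (fun i => Odd i), LinearMap.det (f i) := by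
  classical
  let z : ℕ → R := fun i => match i with
    | 0 => LinearMap.det (f 0)
    | i + 1 => if h : i < k then
        LinearMap.det ((f (i + 1)).restrict (aux_ker_le (d i) _ _ (hcomm i h))) else 1
  have hzs : ∀ i (h : i < k), z (i + 1) =
      LinearMap.det ((f (i + 1)).restrict (aux_ker_le (d i) _ _ (hcomm i h))) :=
    fun i h => dif_pos h
  have hs : ∀ i, i < k → LinearMap.det (f (i + 1)) = z (i + 1) * z i := by
    intro i hi
    have := hfree i (by omega)
    have := hfree (i + 1) (by omega)
    have := hfin i (by omega)
    have := hfin (i + 1) (by omega)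
    rw [aux_det (d i) _ _ (hcomm i hi), hzs i hi]
    congr 1
    cases i with
    | zero => exact aux_top _ _ (LinearMap.range_eq_top.2 hsurj) _
    | succ j =>
      rw [hzs j (by omega)]
      exact aux_restrict _ _ _ (hexact j (by omega)).linearMap_ker_eq.symm _ _
  have hzk : z k = 1 := by
    obtain ⟨j, rfl⟩ : ∃ j, k = j + 1 := ⟨k - 1, by omega⟩
    rw [hzs j (by omega)]
    exact aux_bot _ _ (LinearMap.ker_eq_bot.2 hinj) _
  have := aux_prod k (fun i => LinearMap.det (f i)) z rfl hs k le_rfl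
  rw [hzk, one_mul, one_mul] at this
  rcases Nat.even_or_odd k with hk' | hk'
  · exact this.1 hk'
  · exact (this.2 hk').symm

/-- For a chain endomorphism `(f_i)` of a bounded exact sequence
`0 → C_k → ⋯ → C_0 → 0` of finitely generated free `ℤ`-modules, the alternating
products of determinants agree: `∏_{i even} det f_i = ∏_{i odd} det f_i`. -/
theorem alternating_det_prod_eq (k : ℕ) (hk : 1 ≤ k)
    (C : ℕ → Type*) [∀ i, AddCommGroup (C i)] [∀ i, Module ℤ (C i)]
    (hfree : ∀ i, i ≤ k → Module.Free ℤ (C i))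
    (hfin : ∀ i, i ≤ k → Module.Finite ℤ (C i))
    (d : ∀ i, C (i + 1) →ₗ[ℤ] C i)
    (hinj : Function.Injective (d (k - 1)))
    (hsurj : Function.Surjective (d 0))
    (hexact : ∀ i, i + 1 < k → Function.Exact (d (i + 1)) (d i))
    (f : ∀ i, C i →ₗ[ℤ] C i)
    (hcomm : ∀ i, i < k → (d i) ∘ₗ (f (i + 1)) = (f i) ∘ₗ (d i)) :
    ∏ i ∈ (Finset.range (k + 1)).filter (fun i => Even i), LinearMap.det (f i) =
      ∏ i ∈ (Finset.range (k + 1)).filter (fun i => Odd i), LinearMap.det (f i) := by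
  exact aux_main k hk C hfree hfin d hinj hsurj hexact f hcomm
end

section
/- Let n ≥ 1 be an integer not divisible by 3. Then Det(1 + a + b) = −3, i.e. the ℤ-linear endomorphism of ℤ[D_{4n}] given by left multiplication by 1 + a + b has determinant −3. -/
/- `ℤ[D_{4n}]`: `DihedralGroup N` has order `2N`, so we take `N = 2n`.
`a = r 1`, `b = sr 0`.  `Det x` is the determinant of the `ℤ`-linear endomorphism of
`ℤ[D_{4n}]` given by left multiplication by `x`. -/

noncomputable section

abbrev R (N : ℕ) : Type := MonoidAlgebra ℤ (DihedralGroup N)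

def gena (N : ℕ) : R N := MonoidAlgebra.of ℤ (DihedralGroup N) (DihedralGroup.r 1)

def genb (N : ℕ) : R N := MonoidAlgebra.of ℤ (DihedralGroup N) (DihedralGroup.sr 0)

/-- `Det x`: the determinant of left multiplication by `x` on `ℤ[D]`, as a `ℤ`-linear map. -/
def Det (N : ℕ) (x : R N) : ℤ := LinearMap.det (LinearMap.mulLeft ℤ x)

/-- The cyclic shift matrix. -/
def shiftP (N : ℕ) (K : Type) [CommRing K] : Matrix (ZMod N) (ZMod N) K :=
  Matrix.of fun i j => if i = j + 1 then 1 else 0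

/-- The inverse cyclic shift matrix. -/
def shiftQ (N : ℕ) (K : Type) [CommRing K] : Matrix (ZMod N) (ZMod N) K :=
  Matrix.of fun i j => if i = j - 1 then 1 else 0

theorem shiftP_mul_shiftQ (N : ℕ) [NeZero N] (K : Type) [CommRing K] :
    shiftP N K * shiftQ N K = 1 := by
  ext i j
  simp [Matrix.mul_apply, shiftP, shiftQ, Matrix.one_apply]

theorem shiftP_pow (N : ℕ) [NeZero N] (K : Type) [CommRing K] (k : ℕ) :
    shiftP N K ^ k = Matrix.of fun i j => if i = j + (k : ZMod N) then 1 else 0 := by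
  induction k with
  | zero => ext i j; simp [Matrix.one_apply]
  | succ k ih =>
    ext i j
    rw [pow_succ, ih]
    simp [Matrix.mul_apply, shiftP]
    congr 1
    rw [add_assoc, add_comm (1 : ZMod N)]

theorem shiftP_charpoly (N : ℕ) [NeZero N] (K : Type) [CommRing K] [Nontrivial K] :
    (shiftP N K).charpoly = Polynomial.X ^ N - 1 := by
  have hN : 0 < N := Nat.pos_of_ne_zero (NeZero.ne N)
  have hcard : (shiftP N K).charpoly.natDegree = N := by
    rw [Matrix.charpoly_natDegree_eq_dim, ZMod.card]
  rw [← sub_eq_zero]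
  set p := (shiftP N K).charpoly - (Polynomial.X ^ N - 1) with hp
  have hm1 := (shiftP N K).charpoly_monic
  have hm2 : (Polynomial.X ^ N - 1 : Polynomial K).Monic :=
    Polynomial.monic_X_pow_sub_C 1 hN.ne'
  have hd2 : (Polynomial.X ^ N - 1 : Polynomial K).natDegree = N :=
    Polynomial.natDegree_X_pow_sub_C (r := 1)
  have hdeg : p.degree < N := by
    have h := Polynomial.degree_sub_lt_left (p := (shiftP N K).charpoly) (q := Polynomial.X ^ N - 1)
      (by rw [Polynomial.degree_eq_natDegree hm1.ne_zero,
            Polynomial.degree_eq_natDegree hm2.ne_zero, hcard, hd2])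
      hm1.ne_zero (by rw [hm1.leadingCoeff, hm2.leadingCoeff])
    rwa [Polynomial.degree_eq_natDegree hm1.ne_zero, hcard] at h
  have hz : Polynomial.aeval (shiftP N K) p = 0 := by
    rw [hp, map_sub, Matrix.aeval_self_charpoly]
    simp only [map_sub, map_pow, Polynomial.aeval_X, map_one, zero_sub, neg_eq_zero, sub_eq_zero]
    rw [shiftP_pow]
    ext i j
    simp [Matrix.one_apply]
  ext k
  rw [Polynomial.coeff_zero]
  by_cases hk : k < N
  · have h1 := congrFun (congrFun hz (k : ZMod N)) 0
    have hnd : p.natDegree < N := by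
      by_cases h0 : p = 0
      · simpa [h0] using hN
      · exact (Polynomial.natDegree_lt_iff_degree_lt h0).2 hdeg
    rw [Polynomial.aeval_eq_sum_range' hnd, Matrix.sum_apply, Finset.sum_eq_single k] at h1
    · simpa [shiftP_pow] using h1
    · intro j hj hjk
      rw [shiftP_pow]
      have : ¬ ((k : ZMod N) = (j : ZMod N)) := by
        rw [ZMod.natCast_eq_natCast_iff']
        rw [Nat.mod_eq_of_lt hk, Nat.mod_eq_of_lt (Finset.mem_range.1 hj)]
        exact fun h => hjk h.symm
      simp [this]
    · intro h; exact absurd (Finset.mem_range.2 hk) h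
  · exact Polynomial.coeff_eq_zero_of_degree_lt (lt_of_lt_of_le hdeg (by exact_mod_cast not_lt.1 hk))

theorem shiftP_quad (N : ℕ) [NeZero N] (h3 : ¬ 3 ∣ N) :
    (1 + shiftP N ℂ + shiftP N ℂ ^ 2).det = 3 := by
  obtain ⟨w, hw⟩ : ∃ w : ℂ, w ^ 2 + w + 1 = 0 := by
    have hr := Complex.isPrimitiveRoot_exp 3 (by norm_num)
    generalize Complex.exp _ = w at hr
    refine ⟨w, ?_⟩
    have := hr.geom_sum_eq_zero (by norm_num)
    simp only [Finset.sum_range_succ, Finset.sum_range_zero, pow_zero, pow_one] at this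
    linear_combination this
  have hw3 : w ^ 3 = 1 := by linear_combination (w - 1) * hw
  have hev (t : ℂ) : (Matrix.scalar (ZMod N) t - shiftP N ℂ).det = t ^ N - 1 := by
    rw [← Matrix.eval_charpoly, shiftP_charpoly]; simp
  have hfac : 1 + shiftP N ℂ + shiftP N ℂ ^ 2 =
      (Matrix.scalar (ZMod N) w - shiftP N ℂ) * (Matrix.scalar (ZMod N) (w ^ 2) - shiftP N ℂ) := by
    have e1 : (Matrix.scalar (ZMod N) w) = w • (1 : Matrix (ZMod N) (ZMod N) ℂ) := by
      rw [Matrix.smul_one_eq_diagonal]; rfl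
    have e2 : (Matrix.scalar (ZMod N) (w ^ 2)) = (w ^ 2) • (1 : Matrix (ZMod N) (ZMod N) ℂ) := by
      rw [Matrix.smul_one_eq_diagonal]; rfl
    have e3 : w ^ 2 = - w - 1 := by linear_combination hw
    have e4 : w * w ^ 2 = 1 := by linear_combination hw3
    rw [e1, e2, sub_mul, mul_sub, mul_sub, Matrix.smul_mul, Matrix.smul_mul, Matrix.mul_smul (shiftP N ℂ),
      Matrix.one_mul, Matrix.one_mul, Matrix.mul_one, smul_smul, e4, e3, sq]
    module
  rw [hfac, Matrix.det_mul, hev, hev]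
  have hmod : N % 3 = 1 ∨ N % 3 = 2 := by omega
  have hN : w ^ N = w ^ (N % 3) := by
    conv_lhs => rw [← Nat.div_add_mod N 3, pow_add, pow_mul, hw3, one_pow, one_mul]
  rw [← pow_mul, mul_comm 2 N, pow_mul, hN]
  rcases hmod with h | h <;> rw [h]
  · linear_combination (w - 2) * hw
  · linear_combination (w ^ 3 + 1 - w) * hw3 - hw

theorem shift_det_int (N : ℕ) [NeZero N] (he : Even N) (h3 : ¬ 3 ∣ N) :
    (1 + shiftP N ℤ + shiftQ N ℤ).det = -3 := by
  have hP : (shiftP N ℤ).det = -1 := by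
    rw [Matrix.det_eq_sign_charpoly_coeff, shiftP_charpoly, ZMod.card, he.neg_one_pow]
    simp [Polynomial.coeff_X_pow, (NeZero.ne N).symm]
  have hquad : (1 + shiftP N ℤ + shiftP N ℤ ^ 2).det = 3 := by
    have h := RingHom.map_det (Int.castRingHom ℂ) (1 + shiftP N ℤ + shiftP N ℤ ^ 2)
    have hmap : (Int.castRingHom ℂ).mapMatrix (shiftP N ℤ) = shiftP N ℂ := by
      ext i j
      simp [shiftP]
    rw [map_add, map_add, map_one, map_pow, hmap, shiftP_quad N h3] at h
    simp only [eq_intCast] at h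
    exact_mod_cast h
  have hm : shiftP N ℤ * (1 + shiftP N ℤ + shiftQ N ℤ) = 1 + shiftP N ℤ + shiftP N ℤ ^ 2 := by
    rw [mul_add, mul_add, shiftP_mul_shiftQ, mul_one, sq]
    abel
  rw [← hm, Matrix.det_mul, hP] at hquad
  linarith

theorem det_block_aux {m : Type} [Fintype m] [DecidableEq m] (A D : Matrix m m ℤ) :
    (Matrix.fromBlocks A 1 1 D).det = (D * A - 1).det := by
  have h : Matrix.fromBlocks A 1 1 D * Matrix.fromBlocks 1 0 (1 - A) 1 =
      Matrix.fromBlocks 1 1 (1 + D * (1 - A)) D := by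
    rw [Matrix.fromBlocks_multiply]
    simp
  have h2 := congrArg Matrix.det h
  rw [Matrix.det_mul, Matrix.det_fromBlocks_zero₁₂, Matrix.det_fromBlocks_one₁₁] at h2
  simp only [Matrix.det_one, mul_one] at h2
  rw [h2]
  congr 1
  rw [mul_sub, mul_one]
  abel

/-- For `n ≥ 1` not divisible by `3`, `Det(1 + a + b) = −3`. -/
theorem det_one_add_a_add_b (n : ℕ) (hn : 1 ≤ n) (h3 : ¬ (3 ∣ n)) :
    Det (2 * n) (1 + gena (2 * n) + genb (2 * n)) = -3 := by
  have : NeZero (2 * n) := ⟨by omega⟩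
  have hd : ¬ 3 ∣ 2 * n := by omega
  generalize hN : 2 * n = N at *
  have he : Even N := ⟨n, by omega⟩
  have hQP : shiftQ N ℤ * shiftP N ℤ = 1 := mul_eq_one_comm.1 (shiftP_mul_shiftQ N ℤ)
  rw [← shift_det_int N he hd, Det,
    ← LinearMap.det_toMatrix ((MonoidAlgebra.basis (DihedralGroup N) ℤ).reindex
      DihedralGroup.equivSum)]
  have hb : (1 + shiftP N ℤ + shiftQ N ℤ) =
      (1 + shiftQ N ℤ) * (1 + shiftP N ℤ) - 1 := by
    rw [mul_add, add_mul, add_mul, hQP]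
    simp only [mul_one, one_mul]
    abel
  rw [hb, ← det_block_aux]
  congr 1
  have h0 : (1 : R N) = MonoidAlgebra.single (DihedralGroup.r 0) 1 := rfl
  ext i j
  rw [LinearMap.toMatrix_apply]
  rcases i with i | i <;> rcases j with j | j <;>
    simp [h0, gena, genb, MonoidAlgebra.basis, MonoidAlgebra.coeffLinearEquiv, add_mul,
      MonoidAlgebra.single_mul_single, Finsupp.single_apply, shiftP, shiftQ, Matrix.one_apply]
  all_goals simp only [@eq_comm _ _ i, add_comm (1 : ZMod N) j]

end
end

section
/- Let n ≥ 1 be an integer not divisible by 3. Then Det(1 + a − ba) ≠ 0, i.e. the ℤ-linear endomorphism of ℤ[D_{4n}] given by left multiplication by 1 + a − ba has nonzero determinant. -/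
/- `ℤ[D_{4n}]`: `DihedralGroup N` has order `2N`, so we take `N = 2n`.
`a = r 1`, `b = sr 0`.  `Det x` is the determinant of the `ℤ`-linear endomorphism of
`ℤ[D_{4n}]` given by left multiplication by `x`. -/

noncomputable section

/-- For `n ≥ 1` not divisible by `3`, `Det(1 + a − ba) ≠ 0`. -/
theorem det_one_add_a_sub_ba_ne_zero (n : ℕ) (hn : 1 ≤ n) (h3 : ¬ (3 ∣ n)) :
    Det (2 * n) (1 + gena (2 * n) - genb (2 * n) * gena (2 * n)) ≠ 0 := by
  have : NeZero (2 * n) := ⟨by omega⟩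
  set a := gena (2 * n) with ha
  set b := genb (2 * n) with hb
  have haN : a ^ (2 * n) = 1 := by
    rw [ha, gena, ← map_pow, DihedralGroup.r_one_pow_n, map_one]
  have hbb : b * b = 1 := by
    rw [hb, genb, ← map_mul, DihedralGroup.sr_mul_self, map_one]
  have haba : a * b * a = b := by
    rw [ha, hb, gena, genb, ← map_mul, ← map_mul]
    congr 1
    simp
  have key : (a * (1 + b * a * b) + a * b * a) * (1 + a - b * a) = 1 + a + a ^ 2 := by
    have h1 : a * (b * a) = b := by rw [← mul_assoc, haba]
    have h2 : ∀ w, a * (b * (a * w)) = b * w := fun w => by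
      rw [← mul_assoc b, ← mul_assoc a, h1]
    have h3 : ∀ w, b * (b * w) = w := fun w => by rw [← mul_assoc, hbb, one_mul]
    simp only [mul_add, add_mul, mul_sub, mul_one, one_mul, mul_assoc, h1, h2, h3, hbb, pow_two]
    abel
  have inj : ∀ z : R (2 * n), (1 + a - b * a) * z = 0 → z = 0 := by
    intro z hz
    have e1 : z + a * z + a * (a * z) = 0 := by
      have : (1 + a + a ^ 2) * z = 0 := by rw [← key, mul_assoc, hz, mul_zero]
      rw [← this]; noncomm_ring
    have e2 : a ^ 3 * z = z := by
      have : a ^ 3 * z - z = a * (z + a * z + a * (a * z)) - (z + a * z + a * (a * z)) := by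
        noncomm_ring
      rw [e1] at this
      simpa [sub_eq_zero] using this
    have e3 : ∀ k : ℕ, a ^ (3 * k) * z = z := by
      intro k
      induction k with
      | zero => simp
      | succ k ih => rw [mul_add, pow_add, mul_assoc, mul_one, e2, ih]
    have e4 : a * z = z := by
      have h0 : ∀ m, 2 * n = m → a ^ m * z = z := by
        rintro m rfl
        rw [haN, one_mul]
      have : 2 * n = 1 + 3 * (2 * n / 3) ∨ 2 * n = 2 + 3 * (2 * n / 3) := by omega
      rcases this with h' | h'
      · have h := h0 _ h'
        rw [pow_add, mul_assoc, e3, pow_one] at h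
        exact h
      · have h := h0 _ h'
        rw [pow_add, mul_assoc, e3] at h
        rw [pow_succ', mul_assoc, h] at e2
        exact e2
    rw [e4, e4] at e1
    have e5 : (3 : ℤ) • z = 0 := by rw [← e1]; abel
    have : Module.IsTorsionFree ℤ (R (2 * n)) := inferInstance
    exact (smul_eq_zero.1 e5).resolve_left (by norm_num)
  intro h
  have hk := LinearMap.bot_lt_ker_of_det_eq_zero h
  exact hk.ne' ((LinearMap.ker_eq_bot').2 (by simpa using inj))

end
end

section
/- Let n ≥ 1 be an integer not divisible by 3, and let J be the kernel of ∂₂. The map α₂ : ℤ[D_{4n}]³ → ℤ[D_{4n}]³, (x,y,z) ↦ ((1+a−ba)x, y, z), maps J into J, and its restriction θ : J → J is a bijection; moreover, as a ℤ-linear automorphism of the finitely generated free ℤ-module J, θ has determinant −1. -/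
/- `ℤ[D_{4n}]`: `DihedralGroup N` has order `2N`, so we take `N = 2n`.
`a = r 1`, `b = sr 0`, `Σ = ∑_{i=0}^{2n-1} aⁱ`.
`∂₂ : ℤ[D]³ → ℤ[D]², (x,y,z) ↦ (Σx + (1+ba)z, (1+b)y + (a−1)z)` (left multiplication by
fixed elements, viewed here as a `ℤ`-linear map so that `J = ker ∂₂` is a `ℤ`-submodule and
determinants of `ℤ`-linear endomorphisms of `J` make sense), and
`α₂ : (x,y,z) ↦ ((1+a−ba)x, y, z)`. -/

noncomputable section

def sig (N : ℕ) : R N := ∑ i ∈ Finset.range N, gena N ^ i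

/-- `∂₂ : ℤ[D]³ → ℤ[D]²`, `(x,y,z) ↦ (Σx + (1+ba)z, (1+b)y + (a−1)z)`. -/
def bdry2 (N : ℕ) : (R N × R N × R N) →ₗ[ℤ] (R N × R N) :=
  LinearMap.prod
    ((LinearMap.mulLeft ℤ (sig N)).comp (LinearMap.fst ℤ (R N) (R N × R N)) +
      (LinearMap.mulLeft ℤ (1 + genb N * gena N)).comp
        ((LinearMap.snd ℤ (R N) (R N)).comp (LinearMap.snd ℤ (R N) (R N × R N))))
    ((LinearMap.mulLeft ℤ (1 + genb N)).comp
        ((LinearMap.fst ℤ (R N) (R N)).comp (LinearMap.snd ℤ (R N) (R N × R N))) +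
      (LinearMap.mulLeft ℤ (gena N - 1)).comp
        ((LinearMap.snd ℤ (R N) (R N)).comp (LinearMap.snd ℤ (R N) (R N × R N))))

/-- `J = ker ∂₂`. -/
def J (N : ℕ) : Submodule ℤ (R N × R N × R N) := LinearMap.ker (bdry2 N)

/-- `α₂ : ℤ[D]³ → ℤ[D]³`, `(x,y,z) ↦ ((1+a−ba)x, y, z)`. -/
def alpha2 (N : ℕ) : (R N × R N × R N) →ₗ[ℤ] (R N × R N × R N) :=
  (LinearMap.mulLeft ℤ (1 + gena N - genb N * gena N)).prodMap LinearMap.id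


open DihedralGroup

/-- Weinstein–Aronszajn identity for linear maps. -/
lemma det_id_add_comp {M P : Type*} [AddCommGroup M] [AddCommGroup P]
    [Module ℤ M] [Module ℤ P] [Module.Free ℤ M] [Module.Finite ℤ M]
    [Module.Free ℤ P] [Module.Finite ℤ P] (X : P →ₗ[ℤ] M) (Y : M →ₗ[ℤ] P) :
    LinearMap.det (LinearMap.id + X.comp Y) = LinearMap.det (LinearMap.id + Y.comp X) := by
  classical
  have bM := Module.Free.chooseBasis ℤ M
  have bP := Module.Free.chooseBasis ℤ P
  rw [← LinearMap.det_toMatrix bM, ← LinearMap.det_toMatrix bP, map_add, map_add,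
    LinearMap.toMatrix_id, LinearMap.toMatrix_id, LinearMap.toMatrix_comp bM bP bM,
    LinearMap.toMatrix_comp bP bM bP, Matrix.det_one_add_mul_comm]

/-- The coordinate sum. -/
def sumL (N : ℕ) [NeZero N] : (ZMod N → ℤ) →ₗ[ℤ] ℤ := ∑ i, LinearMap.proj i

lemma sumL_apply (N : ℕ) [NeZero N] (p : ZMod N → ℤ) : sumL N p = ∑ i, p i := by
  simp [sumL]

/-- Sum-zero functions. -/
def I0 (N : ℕ) [NeZero N] : Submodule ℤ (ZMod N → ℤ) := LinearMap.ker (sumL N)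

lemma mem_I0 (N : ℕ) [NeZero N] (p : ZMod N → ℤ) : p ∈ I0 N ↔ ∑ i, p i = 0 := by
  rw [I0, LinearMap.mem_ker, sumL_apply]

lemma perm_mem (N : ℕ) [NeZero N] (e : Equiv.Perm (ZMod N)) :
    ∀ p ∈ I0 N, LinearMap.funLeft ℤ ℤ e p ∈ I0 N := by
  intro p hp
  rw [mem_I0] at *
  simpa [LinearMap.funLeft_apply] using (Equiv.sum_comp e p).trans hp

/-- Action of a permutation on sum-zero functions. -/
def op (N : ℕ) [NeZero N] (e : Equiv.Perm (ZMod N)) : I0 N →ₗ[ℤ] I0 N :=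
  (LinearMap.funLeft ℤ ℤ e).restrict (perm_mem N e)

lemma op_apply (N : ℕ) [NeZero N] (e : Equiv.Perm (ZMod N)) (p : I0 N) (i : ZMod N) :
    (op N e p).1 i = p.1 (e i) := rfl

instance I0_quot_free (N : ℕ) [NeZero N] : Module.Free ℤ ((ZMod N → ℤ) ⧸ I0 N) := by
  have hs : Function.Surjective (sumL N) := by
    intro c
    refine ⟨Pi.single 0 c, ?_⟩
    rw [sumL_apply]; simp
  exact Module.Free.of_equiv ((sumL N).quotKerEquivOfSurjective hs).symm

lemma det_op (N : ℕ) [NeZero N] (e : Equiv.Perm (ZMod N)) :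
    LinearMap.det (op N e) = Equiv.Perm.sign e := by
  have h := LinearMap.det_eq_det_mul_det (I0 N) (LinearMap.funLeft ℤ ℤ e) (perm_mem N e)
  have h1 : (I0 N).mapQ (I0 N) (LinearMap.funLeft ℤ ℤ e) (perm_mem N e) = LinearMap.id := by
    apply Submodule.linearMap_qext
    ext1 p
    ext1
    simp only [LinearMap.comp_apply, Submodule.mkQ_apply, Submodule.mapQ_apply,
      LinearMap.id_apply]
    rw [Submodule.Quotient.eq, mem_I0]
    simp only [Pi.sub_apply, LinearMap.funLeft_apply, Finset.sum_sub_distrib, Equiv.sum_comp e,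
      sub_self]
  have h2 : LinearMap.det (LinearMap.funLeft ℤ ℤ e) = (Equiv.Perm.sign e : ℤ) := by
    rw [← LinearMap.det_toMatrix']
    have : LinearMap.toMatrix' (LinearMap.funLeft ℤ ℤ e) = e.permMatrix ℤ := by
      ext i j
      simp [LinearMap.toMatrix'_apply, LinearMap.funLeft_apply, Equiv.Perm.permMatrix,
        PEquiv.toMatrix_apply, Pi.single_apply, eq_comm]
    rw [this, Matrix.det_permutation]
    simp
  rw [h1, LinearMap.det_id, mul_one, h2] at h
  exact h.symm

lemma sign_shift (n : ℕ) (hn : 1 ≤ n) [NeZero (2 * n)] :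
    Equiv.Perm.sign (Equiv.addRight (1 : ZMod (2 * n))) = -1 := by
  obtain ⟨m, hm⟩ : ∃ m, 2 * n = m + 1 := ⟨2 * n - 1, by omega⟩
  have hodd : Odd m := by rw [Nat.odd_iff]; omega
  have key : ∀ N : ℕ, N = m + 1 → ∀ [NeZero N],
      Equiv.Perm.sign (Equiv.addRight (1 : ZMod N)) = -1 := by
    rintro N rfl _
    have : (Equiv.addRight (1 : ZMod (m + 1))) = finRotate (m + 1) := by
      ext1 i
      exact (finRotate_succ_apply i).symm
    have h2 := sign_finRotate (m + 1)
    rw [Nat.add_sub_cancel, hodd.neg_one_pow] at h2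
    rw [← h2, ← this]
    congr
  exact key _ hm

lemma op_sub_inj (N : ℕ) [NeZero N] :
    LinearMap.det (op N (Equiv.addRight 1) - LinearMap.id) ≠ 0 := by
  rw [Ne, LinearMap.det_eq_zero_iff_ker_ne_bot, not_not, LinearMap.ker_eq_bot']
  intro p hp
  have h1 : ∀ i, p.1 (i + 1) = p.1 i := by
    intro i
    have := congrFun (congrArg Subtype.val hp) i
    have h : p.1 (i + 1) - p.1 i = 0 := this
    linarith
  have h2 : ∀ k : ℕ, p.1 (k : ZMod N) = p.1 0 := by
    intro k
    induction k with
    | zero => simp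
    | succ k ih => rw [Nat.cast_succ, h1, ih]
  have h3 : ∀ i, p.1 i = p.1 0 := fun i => by
    rw [← h2 i.val, ZMod.natCast_zmod_val]
  have h4 := (mem_I0 N p.1).1 p.2
  simp only [h3, Finset.sum_const, Finset.card_univ, ZMod.card, nsmul_eq_mul, mul_eq_zero,
    Nat.cast_eq_zero, NeZero.ne, false_or] at h4
  ext i
  rw [h3, h4]; rfl

/-- `1 + S + S⁻¹` has determinant `-1` on sum-zero functions. -/
lemma det_W (n : ℕ) (hn : 1 ≤ n) (h3 : ¬ (3 ∣ n)) [NeZero (2 * n)] :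
    LinearMap.det (LinearMap.id + (op (2 * n) (Equiv.addRight 1) +
      op (2 * n) (Equiv.addRight (-1)))) = -1 := by
  set N := 2 * n with hN
  set S := op N (Equiv.addRight 1) with hS
  set W := (LinearMap.id + (S + op N (Equiv.addRight (-1)))) with hW
  have hco : Nat.Coprime 3 N := by
    rw [Nat.Prime.coprime_iff_not_dvd Nat.prime_three]; omega
  let u : (ZMod N)ˣ := ZMod.unitOfCoprime 3 hco
  have hu : (u : ZMod N) = 3 := by simp [u]
  have hdetS : LinearMap.det S = -1 := by
    rw [hS, det_op, sign_shift n hn]; simp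
  have hone : ∀ v : (ZMod N)ˣ, ∀ p : I0 N, op N (Units.mulLeft v) (op N (Units.mulLeft v⁻¹) p) = p := by
    intro v p
    ext i
    simp [op_apply]
  let Φ : I0 N ≃ₗ[ℤ] I0 N := LinearEquiv.ofLinear (op N (Units.mulLeft u))
    (op N (Units.mulLeft u⁻¹)) (by ext1 p; exact hone u p)
    (by ext1 p; have := hone u⁻¹ p; rwa [inv_inv] at this)
  have hconj : (Φ : I0 N →ₗ[ℤ] I0 N).comp
      (((S - LinearMap.id).comp (S.comp W)).comp (Φ.symm : I0 N →ₗ[ℤ] I0 N))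
      = S - LinearMap.id := by
    have : (Φ : I0 N →ₗ[ℤ] I0 N).comp ((S - LinearMap.id).comp (S.comp W))
        = (S - LinearMap.id).comp (Φ : I0 N →ₗ[ℤ] I0 N) := by
      ext1 p
      ext i
      change p.1 ((u : ZMod N) * i + 1 + 1) + (p.1 ((u : ZMod N) * i + 1 + 1 + 1) +
        p.1 ((u : ZMod N) * i + 1 + 1 + -1)) - (p.1 ((u : ZMod N) * i + 1) +
        (p.1 ((u : ZMod N) * i + 1 + 1) + p.1 ((u : ZMod N) * i + 1 + -1)))
        = p.1 ((u : ZMod N) * (i + 1)) - p.1 ((u : ZMod N) * i)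
      rw [hu]
      have e1 : (3 : ZMod N) * i + 1 + 1 + -1 = 3 * i + 1 := by ring
      have e2 : (3 : ZMod N) * i + 1 + -1 = 3 * i := by ring
      have e3 : (3 : ZMod N) * i + 1 + 1 + 1 = 3 * (i + 1) := by ring
      rw [e1, e2, e3]; ring
    rw [← LinearMap.comp_assoc, this, LinearMap.comp_assoc]
    ext1 p
    simp
  have hdet := LinearMap.det_conj ((S - LinearMap.id).comp (S.comp W)) Φ
  rw [hconj, LinearMap.det_comp, LinearMap.det_comp, hdetS] at hdet
  have h0 : LinearMap.det (S - LinearMap.id) ≠ 0 := op_sub_inj N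
  have : LinearMap.det (S - LinearMap.id) * (LinearMap.det W + 1) = 0 := by linarith
  rcases mul_eq_zero.1 this with h | h
  · exact absurd h h0
  · linarith

section coeffs

variable (N : ℕ) (x : R N) (i : ZMod N)

lemma ca_r : (gena N * x).coeff (r i) = x.coeff (r (i - 1)) := by
  simp [gena, MonoidAlgebra.of_apply, sub_eq_neg_add]

lemma ca_sr : (gena N * x).coeff (sr i) = x.coeff (sr (i + 1)) := by
  simp [gena, MonoidAlgebra.of_apply]

lemma cb_r : (genb N * x).coeff (r i) = x.coeff (sr i) := by
  simp [genb, MonoidAlgebra.of_apply]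

lemma cb_sr : (genb N * x).coeff (sr i) = x.coeff (r i) := by
  simp [genb, MonoidAlgebra.of_apply]

lemma cpow_r (k : ℕ) : (gena N ^ k * x).coeff (r i) = x.coeff (r (i - k)) := by
  induction k generalizing i with
  | zero => simp
  | succ k ih =>
    rw [pow_succ', mul_assoc, ca_r, ih]; congr 2; push_cast; ring

lemma cpow_sr (k : ℕ) : (gena N ^ k * x).coeff (sr i) = x.coeff (sr (i + k)) := by
  induction k generalizing i with
  | zero => simp
  | succ k ih =>
    rw [pow_succ', mul_assoc, ca_sr, ih]; congr 2; push_cast; ring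

lemma sum_range_zmod [NeZero N] (f : ZMod N → ℤ) :
    ∑ k ∈ Finset.range N, f (k : ZMod N) = ∑ k : ZMod N, f k := by
  refine Finset.sum_bij' (fun k _ => (k : ZMod N)) (fun k _ => k.val) ?_ ?_ ?_ ?_ ?_
  · simp
  · intro k _; simpa using ZMod.val_lt k
  · intro k hk; exact ZMod.val_cast_of_lt (by simpa using hk)
  · intro k _; simp
  · simp

lemma cs_r [NeZero N] : (sig N * x).coeff (r i) = ∑ k, x.coeff (r k) := by
  rw [sig, Finset.sum_mul, MonoidAlgebra.coeff_sum, Finsupp.finset_sum_apply]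
  simp only [cpow_r]
  rw [sum_range_zmod N (fun k => x.coeff (r (i - k)))]
  exact Equiv.sum_comp (Equiv.subLeft i) (fun k => x.coeff (r k))

lemma cs_sr [NeZero N] : (sig N * x).coeff (sr i) = ∑ k, x.coeff (sr k) := by
  rw [sig, Finset.sum_mul, MonoidAlgebra.coeff_sum, Finsupp.finset_sum_apply]
  simp only [cpow_sr]
  rw [sum_range_zmod N (fun k => x.coeff (sr (i + k)))]
  exact Equiv.sum_comp (Equiv.addLeft i) (fun k => x.coeff (sr k))

end coeffs

lemma mem_J (N : ℕ) (v : R N × R N × R N) : v ∈ J N ↔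
    sig N * v.1 + (1 + genb N * gena N) * v.2.2 = 0 ∧
      (1 + genb N) * v.2.1 + (gena N - 1) * v.2.2 = 0 := by
  simp [J, bdry2, Prod.ext_iff]

/-- `Y : ℤ[D] → (ZMod N → ℤ)`. -/
def Ymap (N : ℕ) : R N →ₗ[ℤ] (ZMod N → ℤ) where
  toFun x := fun i => x.coeff (sr (i + 1)) - x.coeff (r (i - 1))
  map_add' x y := by ext i; simp; ring
  map_smul' c x := by ext i; simp [-zsmul_eq_mul, MonoidAlgebra.coeff_smul]; ring

/-- Coefficient function of `(b - 1) p`. -/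
def xfun (N : ℕ) (p : ZMod N → ℤ) : DihedralGroup N → ℤ
  | r i => - p i
  | sr i => p i

/-- `X : (ZMod N → ℤ) → ℤ[D]`, `p ↦ (b - 1) p`. -/
def Xmap (N : ℕ) [NeZero N] : (ZMod N → ℤ) →ₗ[ℤ] R N where
  toFun p := MonoidAlgebra.ofCoeff (Finsupp.equivFunOnFinite.symm (xfun N p))
  map_add' p q := by
    ext g; cases g <;> simp [xfun]; ring
  map_smul' c p := by
    ext g; cases g <;> simp [xfun, -zsmul_eq_mul, MonoidAlgebra.coeff_smul]

lemma X_r (N : ℕ) [NeZero N] (p : ZMod N → ℤ) (i : ZMod N) :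
    (Xmap N p).coeff (r i) = - p i := by simp [Xmap, xfun]

lemma X_sr (N : ℕ) [NeZero N] (p : ZMod N → ℤ) (i : ZMod N) :
    (Xmap N p).coeff (sr i) = p i := by simp [Xmap, xfun]

lemma sig_X (N : ℕ) [NeZero N] (p : ZMod N → ℤ) (hp : p ∈ I0 N) : sig N * Xmap N p = 0 := by
  rw [mem_I0] at hp
  ext g
  cases g with
  | r i => rw [cs_r]; simp [X_r, hp]
  | sr i => rw [cs_sr]; simp [X_sr, hp]

lemma Y_mem (N : ℕ) [NeZero N] (v : R N × R N × R N) (hv : v ∈ J N) : Ymap N v.1 ∈ I0 N := by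
  have h := ((mem_J N v).1 hv).1
  have h1 := congrArg (fun w : R N => w.coeff (r 0)) h
  have h2 := congrArg (fun w : R N => w.coeff (sr 1)) h
  simp only [add_mul, one_mul, mul_assoc, MonoidAlgebra.coe_add, Pi.add_apply, cs_r, cs_sr,
    cb_r, cb_sr, ca_r, ca_sr, MonoidAlgebra.coeff_zero, Finsupp.coe_zero, Pi.zero_apply,
    zero_add, sub_self] at h1 h2
  rw [mem_I0]
  change ∑ i, (v.1.coeff (sr (i + 1)) - v.1.coeff (r (i - 1))) = 0
  have e1 : ∑ i, v.1.coeff (sr (i + 1)) = ∑ i, v.1.coeff (sr i) :=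
    Equiv.sum_comp (Equiv.addRight (1 : ZMod N)) (fun i => v.1.coeff (sr i))
  have e2 : ∑ i, v.1.coeff (r (i - 1)) = ∑ i, v.1.coeff (r i) :=
    Equiv.sum_comp (Equiv.subRight (1 : ZMod N)) (fun i => v.1.coeff (r i))
  rw [Finset.sum_sub_distrib, e1, e2]
  linarith

lemma u_mul (N : ℕ) [NeZero N] (x : R N) :
    (1 + gena N - genb N * gena N) * x = x + Xmap N (Ymap N x) := by
  ext g
  cases g with
  | r i =>
    simp only [sub_mul, add_mul, one_mul, mul_assoc, MonoidAlgebra.coeff_add,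
      MonoidAlgebra.coeff_sub, Finsupp.add_apply, Finsupp.sub_apply, X_r, cb_r, ca_sr, ca_r]
    simp [Ymap]; ring
  | sr i =>
    simp only [sub_mul, add_mul, one_mul, mul_assoc, MonoidAlgebra.coeff_add,
      MonoidAlgebra.coeff_sub, Finsupp.add_apply, Finsupp.sub_apply, X_sr, cb_sr, ca_sr, ca_r]
    simp [Ymap]; ring

lemma X_memJ (N : ℕ) [NeZero N] (p : ZMod N → ℤ) (hp : p ∈ I0 N) :
    (Xmap N p, 0, 0) ∈ J N := by
  rw [mem_J]; simp [sig_X N p hp]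

lemma alpha_eq (N : ℕ) [NeZero N] (v : R N × R N × R N) :
    alpha2 N v = v + (Xmap N (Ymap N v.1), 0, 0) := by
  ext1
  · simp only [alpha2, LinearMap.prodMap_apply, LinearMap.mulLeft_apply, u_mul, Prod.fst_add]
  · simp [alpha2]

/-- `X : I → J`. -/
def XJ (N : ℕ) [NeZero N] : I0 N →ₗ[ℤ] J N :=
  LinearMap.codRestrict (J N)
    ((LinearMap.inl ℤ (R N) (R N × R N)).comp ((Xmap N).comp (I0 N).subtype))
    (fun p => X_memJ N p.1 p.2)

/-- `Y : J → I`. -/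
def YJ (N : ℕ) [NeZero N] : J N →ₗ[ℤ] I0 N :=
  LinearMap.codRestrict (I0 N)
    ((Ymap N).comp ((LinearMap.fst ℤ (R N) (R N × R N)).comp (J N).subtype))
    (fun v => Y_mem N v.1 v.2)

lemma YX (N : ℕ) [NeZero N] : (YJ N).comp (XJ N) =
    op N (Equiv.addRight 1) + op N (Equiv.addRight (-1)) := by
  ext1 p
  ext i
  change (Xmap N p.1).coeff (sr (i + 1)) - (Xmap N p.1).coeff (r (i - 1)) =
    p.1 (i + 1) + p.1 (i + -1)
  rw [X_r, X_sr, sub_neg_eq_add, sub_eq_add_neg]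

/-- For `n ≥ 1` not divisible by `3`: `α₂` maps `J` into `J`, its restriction
`θ : J → J` is a bijection, and as a `ℤ`-linear automorphism of `J` it has
determinant `−1`. -/
theorem theta_bijective_det_neg_one (n : ℕ) (hn : 1 ≤ n) (h3 : ¬ (3 ∣ n)) :
    ∃ h : ∀ x ∈ J (2 * n), alpha2 (2 * n) x ∈ J (2 * n),
      Function.Bijective ((alpha2 (2 * n)).restrict h) ∧
      LinearMap.det ((alpha2 (2 * n)).restrict h) = -1 := by
  haveI : NeZero (2 * n) := ⟨by omega⟩
  have h : ∀ x ∈ J (2 * n), alpha2 (2 * n) x ∈ J (2 * n) := by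
    intro v hv
    rw [alpha_eq]
    exact Submodule.add_mem _ hv (X_memJ _ _ (Y_mem _ v hv))
  haveI hfin : Module.Finite ℤ (R (2 * n)) :=
    Module.Finite.equiv (MonoidAlgebra.coeffLinearEquiv ℤ).symm
  haveI hfree : Module.Free ℤ (R (2 * n)) :=
    Module.Free.of_equiv (MonoidAlgebra.coeffLinearEquiv ℤ).symm
  haveI hJfin : Module.Finite ℤ (J (2 * n)) := inferInstance
  haveI hJfree : Module.Free ℤ (J (2 * n)) := inferInstance
  have heq : (alpha2 (2 * n)).restrict h =
      LinearMap.id + (XJ (2 * n)).comp (YJ (2 * n)) := by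
    ext1 v
    apply Subtype.ext
    exact alpha_eq _ v.1
  have hdet : LinearMap.det ((alpha2 (2 * n)).restrict h) = -1 := by
    rw [heq, det_id_add_comp, YX]
    exact det_W n hn h3
  refine ⟨h, ?_, hdet⟩
  rw [← Module.End.isUnit_iff, LinearMap.isUnit_iff_isUnit_det, hdet]
  exact isUnit_one.neg

end
end

section
/- Let n ≥ 1 and let 𝔽₂ denote the field of two elements regarded as a trivial module over the dihedral group D_{4n} of order 4n. Then the group cohomology of D_{4n} with coefficients in 𝔽₂ satisfies: H⁰(D_{4n}, 𝔽₂) has 𝔽₂-dimension 1, H¹(D_{4n}, 𝔽₂) has 𝔽₂-dimension 2, and H²(D_{4n}, 𝔽₂) has 𝔽₂-dimension 3. -/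
namespace DihCoh

open DihedralGroup

/-- The 2-cocycle condition for trivial coefficients. -/
def IsC {G : Type} [Group G] (f : G × G → ZMod 2) : Prop :=
  ∀ g h j : G, f (g * h, j) + f (g, h) = f (h, j) + f (g, h * j)

/-- The central extension attached to a cocycle. -/
@[ext] structure Ext {G : Type} [Group G] (f : G × G → ZMod 2) (hf : IsC f) where
  /-- fibre coordinate -/
  x : ZMod 2
  /-- base coordinate -/
  g : G

lemma IsC.one_left {G : Type} [Group G] {f : G × G → ZMod 2} (hf : IsC f) (g : G) :
    f (1, g) = f (1, 1) := by
  have h := hf 1 1 g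
  simp only [one_mul] at h
  exact (add_left_cancel h).symm

lemma IsC.one_right {G : Type} [Group G] {f : G × G → ZMod 2} (hf : IsC f) (g : G) :
    f (g, 1) = f (1, 1) := by
  have h := hf g 1 1
  simp only [mul_one] at h
  exact add_right_cancel h

lemma z2 (a : ZMod 2) : a + a = 0 := CharTwo.add_self_eq_zero a

instance {G : Type} [Group G] (f : G × G → ZMod 2) (hf : IsC f) : Mul (Ext f hf) :=
  ⟨fun a b => ⟨a.x + b.x + f (a.g, b.g), a.g * b.g⟩⟩
instance {G : Type} [Group G] (f : G × G → ZMod 2) (hf : IsC f) : One (Ext f hf) :=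
  ⟨⟨f (1, 1), 1⟩⟩
instance {G : Type} [Group G] (f : G × G → ZMod 2) (hf : IsC f) : Inv (Ext f hf) :=
  ⟨fun a => ⟨a.x + f (a.g⁻¹, a.g) + f (1, 1), a.g⁻¹⟩⟩

section
variable {G : Type} [Group G] {f : G × G → ZMod 2} {hf : IsC f}

lemma mul_x (a b : Ext f hf) : (a * b).x = a.x + b.x + f (a.g, b.g) := rfl
lemma mul_g (a b : Ext f hf) : (a * b).g = a.g * b.g := rfl
lemma one_x : (1 : Ext f hf).x = f (1, 1) := rfl
lemma one_g : (1 : Ext f hf).g = 1 := rfl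
lemma inv_x (a : Ext f hf) : (a⁻¹).x = a.x + f (a.g⁻¹, a.g) + f (1, 1) := rfl
lemma inv_g (a : Ext f hf) : (a⁻¹).g = a.g⁻¹ := rfl

end

instance {G : Type} [Group G] (f : G × G → ZMod 2) (hf : IsC f) : Group (Ext f hf) :=
  Group.ofLeftAxioms
    (fun a b c => by
      ext
      · simp only [mul_x, mul_g]
        linear_combination hf a.g b.g c.g
      · simp only [mul_g, mul_assoc])
    (fun a => by
      ext
      · simp only [mul_x, one_x, one_g, hf.one_left]
        linear_combination z2 (f (1, 1))
      · simp only [mul_g, one_g, one_mul])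
    (fun a => by
      ext
      · simp only [mul_x, one_x, inv_x, inv_g]
        linear_combination z2 a.x + z2 (f (a.g⁻¹, a.g))
      · simp only [mul_g, one_g, inv_g, inv_mul_cancel])

/-- Universal property of the dihedral group. -/
lemma exists_hom {N : ℕ} {E : Type} [Group E] (R S : E) (hR : R ^ N = 1) (hS : S * S = 1)
    (hSR : (S * R) * (S * R) = 1) :
    ∃ φ : DihedralGroup N →* E, φ (r 1) = R ∧ φ (sr 0) = S := by
  let p : ZMod N →+ Additive E :=
    ZMod.lift N ⟨zmultiplesHom (Additive E) (Additive.ofMul R), by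
      simp [← ofMul_pow, hR]⟩
  let q : ZMod N → E := fun i => (p i).toMul
  have q_add : ∀ i j, q (i + j) = q i * q j := fun i j => by simp [q]
  have q_neg : ∀ i, q (-i) = (q i)⁻¹ := fun i => by simp [q]
  have q_int : ∀ k : ℤ, q (k : ZMod N) = R ^ k := fun k => by
    simp only [q, p, ZMod.lift_coe]
    simp
  have q0 : q 0 = 1 := by simp [q]
  have q1 : q 1 = R := by simpa using q_int 1
  have hSi : S⁻¹ = S := inv_eq_of_mul_eq_one_left hS
  have hc : S * R * S⁻¹ = R⁻¹ := by
    rw [hSi]; apply eq_inv_of_mul_eq_one_left; simpa [mul_assoc] using hSR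
  have hcq : ∀ i, S * q i * S⁻¹ = q (-i) := fun i => by
    obtain ⟨k, rfl⟩ := ZMod.intCast_surjective i
    rw [q_neg, q_int, ← conj_zpow, hc, inv_zpow]
  have hcq' : ∀ i, q i * S = S * q (-i) := fun i => by
    have h := hcq i
    have h2 := hcq (-i)
    rw [neg_neg] at h2
    rw [← h2]; simp [mul_assoc]
  refine ⟨MonoidHom.mk' (fun g => match g with
    | r i => q i
    | sr i => S * q i) ?_, q1, ?_⟩
  rotate_left
  · change S * q 0 = S
    rw [q0, mul_one]
  rintro (i | i) (j | j)
  · simp [q_add]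
  · simp only [r_mul_sr]
    rw [← mul_assoc, hcq', mul_assoc, ← q_add]; congr 2; ring
  · simp only [sr_mul_r]
    rw [mul_assoc, ← q_add]
  · simp only [sr_mul_sr]
    rw [mul_assoc, ← mul_assoc (q i), hcq', mul_assoc, ← mul_assoc S, hS, one_mul, ← q_add]
    congr 1; ring

lemma pow_lift {N : ℕ} {f : DihedralGroup N × DihedralGroup N → ZMod 2} (hf : IsC f) (k : ℕ) :
    (⟨0, r 1⟩ : Ext f hf) ^ k =
      ⟨f (1, 1) + ∑ j ∈ Finset.range k, f (r (j : ZMod N), r 1), r (k : ZMod N)⟩ := by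
  induction k with
  | zero => ext <;> simp [one_x, one_g]
  | succ k ih =>
    rw [pow_succ, ih]
    ext
    · simp only [mul_x, Finset.sum_range_succ]; ring
    · simp [mul_g]

/-- A cocycle with vanishing invariants is a coboundary. -/
lemma split {N : ℕ} {f : DihedralGroup N × DihedralGroup N → ZMod 2} (hf : IsC f)
    (h0 : f (sr 0, sr 0) + f (1, 1) = 0) (h1 : f (sr 1, sr 1) + f (1, 1) = 0)
    (h2 : ∑ j ∈ Finset.range N, f (r (j : ZMod N), r 1) = 0) :
    ∃ x : DihedralGroup N → ZMod 2, ∀ g h, f (g, h) = x h - x (g * h) + x g := by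
  obtain ⟨φ, hφr, hφs⟩ := exists_hom (N := N) (⟨0, r 1⟩ : Ext f hf) ⟨0, sr 0⟩
    (by rw [pow_lift, h2]; ext <;> simp [one_x, one_g])
    (by
      ext
      · simp only [mul_x, one_x]; linear_combination h0 - z2 (f (1, 1))
      · simp [mul_g, one_g])
    (by
      ext
      · simp only [mul_x, mul_g, one_x, sr_mul_r, zero_add]
        linear_combination h1 - z2 (f (1, 1)) + z2 (f (sr 0, r 1))
      · simp [mul_g, one_g])
  have hr : ∀ k : ℕ, (φ (r (k : ZMod N))).g = r (k : ZMod N) := fun k => by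
    rw [← r_one_pow, map_pow, hφr, pow_lift, r_one_pow]
  have hri : ∀ i : ZMod N, (φ (r i)).g = r i := by
    let π : Ext f hf →* DihedralGroup N := MonoidHom.mk' (fun a => a.g) (fun a b => rfl)
    intro i
    obtain ⟨k, rfl⟩ := ZMod.intCast_surjective i
    have : π (φ (r (k : ZMod N))) = r (k : ZMod N) := by
      rw [← r_one_zpow, map_zpow, map_zpow, hφr]; rfl
    exact this
  have hg : ∀ g, (φ g).g = g := by
    rintro (i | i)
    · exact hri i
    · have : sr i = sr 0 * r i := by simp
      rw [this, map_mul, mul_g, hri, hφs]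
  refine ⟨fun g => (φ g).x, fun g h => ?_⟩
  have := congrArg Ext.x (map_mul φ g h)
  rw [mul_x, hg, hg] at this
  simp only [this]
  linear_combination z2 (f (g, h))

/-- the index of an element, as an integer -/
def m {N : ℕ} : DihedralGroup N → ℤ
  | r i => i.val
  | sr i => i.val

/-- the sign of an element, as an integer -/
def sg {N : ℕ} : DihedralGroup N → ℤ
  | r _ => 1
  | sr _ => -1

lemma sg_mul {N : ℕ} (g h : DihedralGroup N) : sg (g * h) = sg g * sg h := by
  rcases g with i | i <;> rcases h with j | j <;> simp [sg]

lemma m_dvd {N : ℕ} [NeZero N] (g h : DihedralGroup N) :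
    (N : ℤ) ∣ m h + sg h * m g - m (g * h) := by
  rw [← ZMod.intCast_zmod_eq_zero_iff_dvd] 
  rcases g with i | i <;> rcases h with j | j <;> simp [sg, m] <;> ring

/-- the carry cocycle, integrally -/
def car {N : ℕ} (g h : DihedralGroup N) : ℤ := (m h + sg h * m g - m (g * h)) / N

lemma car_spec {N : ℕ} [NeZero N] (g h : DihedralGroup N) :
    N * car g h = m h + sg h * m g - m (g * h) := Int.mul_ediv_cancel' (m_dvd g h)

lemma car_cocycle {N : ℕ} [NeZero N] (g h k : DihedralGroup N) :
    car (g * h) k + sg k * car g h = car h k + car g (h * k) := by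
  have hN : (N : ℤ) ≠ 0 := by exact_mod_cast NeZero.ne N
  apply mul_left_cancel₀ hN
  have e1 := car_spec (g * h) k
  have e2 := car_spec g h
  have e3 := car_spec h k
  have e4 := car_spec g (h * k)
  rw [sg_mul, ← mul_assoc] at e4
  linear_combination e1 + sg k * e2 - e3 - e4

/-- the carry cocycle -/
def carC (N : ℕ) : DihedralGroup N × DihedralGroup N → ZMod 2 := fun p => (car p.1 p.2 : ℤ)

lemma sg_cast {N : ℕ} (g : DihedralGroup N) : ((sg g : ℤ) : ZMod 2) = 1 := by
  rcases g with i | i <;> simp [sg]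

lemma carC_isC (N : ℕ) [NeZero N] : IsC (carC N) := fun g h k => by
  have := congrArg (Int.cast : ℤ → ZMod 2) (car_cocycle g h k)
  push_cast [sg_cast] at this
  simpa [carC] using this

lemma m_one {N : ℕ} : m (1 : DihedralGroup N) = 0 := by
  rw [one_def]; simp [m]

lemma carC_one (N : ℕ) : carC N (1, 1) = 0 := by
  simp [carC, car, m_one]

lemma carC_sr0 (N : ℕ) : carC N (sr 0, sr 0) = 0 := by
  simp only [carC, car, sr_mul_self, m_one]; simp [m, sg]

lemma carC_sr1 (N : ℕ) : carC N (sr 1, sr 1) = 0 := by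
  simp only [carC, car, sr_mul_self, m_one]; simp [m, sg]

lemma carC_sum (N : ℕ) (hN : 2 ≤ N) :
    ∑ j ∈ Finset.range N, carC N (r (j : ZMod N), r 1) = 1 := by
  have : NeZero N := ⟨by omega⟩
  have : Fact (1 < N) := ⟨by omega⟩
  have key : ∑ j ∈ Finset.range N, car (r (j : ZMod N)) (r 1) = 1 := by
    have hN : (N : ℤ) ≠ 0 := by exact_mod_cast NeZero.ne N
    apply mul_left_cancel₀ hN
    rw [Finset.mul_sum]
    have : ∀ j ∈ Finset.range N, (N : ℤ) * car (r (j : ZMod N)) (r 1)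
        = 1 - (m (r ((j + 1 : ℕ) : ZMod N)) - m (r (j : ZMod N))) := fun j _ => by
      rw [car_spec]; simp [sg, m, ZMod.val_one]; ring
    rw [Finset.sum_congr rfl this, Finset.sum_sub_distrib,
      Finset.sum_range_sub (fun j : ℕ => m (r (j : ZMod N)))]
    simp [m]
  simp only [carC]
  rw [← Int.cast_sum, key, Int.cast_one]

/-- the character which is the parity of the index -/
def u (n : ℕ) : DihedralGroup (2 * n) → ZMod 2
  | r i => ZMod.castHom (dvd_mul_right 2 n) (ZMod 2) i
  | sr i => ZMod.castHom (dvd_mul_right 2 n) (ZMod 2) i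

/-- the character which detects reflections -/
def v (n : ℕ) : DihedralGroup (2 * n) → ZMod 2
  | r _ => 0
  | sr _ => 1

lemma u_mul (n : ℕ) (g h : DihedralGroup (2 * n)) : u n (g * h) = u n g + u n h := by
  rcases g with i | i <;> rcases h with j | j <;>
    simp only [u, r_mul_r, r_mul_sr, sr_mul_r, sr_mul_sr, map_add, map_sub, CharTwo.sub_eq_add,
      add_comm]

lemma v_mul (n : ℕ) (g h : DihedralGroup (2 * n)) : v n (g * h) = v n g + v n h := by
  rcases g with i | i <;> rcases h with j | j <;> simp [v, z2]

lemma cup_isC {G : Type} [Group G] (a b : G → ZMod 2) (ha : ∀ g h, a (g * h) = a g + a h)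
    (hb : ∀ g h, b (g * h) = b g + b h) : IsC (fun p : G × G => a p.1 * b p.2) := fun g h k => by
  simp only [ha, hb]; ring

/-- The coefficient module. -/
noncomputable abbrev A (N : ℕ) : Rep (ZMod 2) (DihedralGroup N) :=
  Rep.trivial (ZMod 2) (DihedralGroup N) (ZMod 2)

/-- The three invariants of a cochain. -/
noncomputable def inv3 (N : ℕ) :
    (DihedralGroup N × DihedralGroup N → ZMod 2) →ₗ[ZMod 2] (Fin 3 → ZMod 2) where
  toFun f := ![f (sr 0, sr 0) + f (1, 1), f (sr 1, sr 1) + f (1, 1),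
    ∑ j ∈ Finset.range N, f (r (j : ZMod N), r 1)]
  map_add' f g := by
    ext i; fin_cases i <;> simp [Finset.sum_add_distrib] <;> ring
  map_smul' c f := by
    ext i; fin_cases i <;> simp [Finset.mul_sum] <;> ring

lemma mem_cocycles (N : ℕ) (f : DihedralGroup N × DihedralGroup N → ZMod 2) :
    f ∈ groupCohomology.cocycles₂ (A N) ↔ IsC f :=
  groupCohomology.mem_cocycles₂_iff (A := A N) f

lemma mem_coboundaries (N : ℕ) (f : DihedralGroup N × DihedralGroup N → ZMod 2) :
    f ∈ groupCohomology.coboundaries₂ (A N) ↔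
      ∃ x : DihedralGroup N → ZMod 2, ∀ g h, f (g, h) = x h - x (g * h) + x g := by
  constructor
  · rintro ⟨x, rfl⟩
    exact ⟨x, fun g h => rfl⟩
  · rintro ⟨x, hx⟩
    exact ⟨x, funext fun p => (hx p.1 p.2).symm⟩

lemma inv3_eq_zero_iff (n : ℕ) {f : DihedralGroup (2 * n) × DihedralGroup (2 * n) → ZMod 2}
    (hf : IsC f) : inv3 (2 * n) f = 0 ↔
      ∃ x : DihedralGroup (2 * n) → ZMod 2, ∀ g h, f (g, h) = x h - x (g * h) + x g := by
  constructor
  · intro h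
    exact split hf (congrFun h 0) (congrFun h 1) (congrFun h 2)
  · rintro ⟨x, hx⟩
    ext i
    fin_cases i
    · change f (sr 0, sr 0) + f (1, 1) = 0
      simp only [hx, sr_mul_self, mul_one]
      linear_combination z2 (x (sr 0))
    · change f (sr 1, sr 1) + f (1, 1) = 0
      simp only [hx, sr_mul_self, mul_one]
      linear_combination z2 (x (sr 1))
    · change ∑ j ∈ Finset.range (2 * n), f (r (j : ZMod (2 * n)), r 1) = 0
      have : ∀ j ∈ Finset.range (2 * n), f (r (j : ZMod (2 * n)), r 1)
          = x (r 1) - (x (r ((j + 1 : ℕ) : ZMod (2 * n))) - x (r (j : ZMod (2 * n)))) :=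
        fun j _ => by
          rw [hx, r_mul_r]; push_cast; ring
      rw [Finset.sum_congr rfl this, Finset.sum_sub_distrib,
        Finset.sum_range_sub (fun j : ℕ => x (r (j : ZMod (2 * n))))]
      have h0 : ((2 * n : ℕ) : ZMod (2 * n)) = 0 := ZMod.natCast_self _
      rw [h0]
      have h2 : (2 : ZMod 2) = 0 := rfl
      simp [h2]

/-- The invariants restricted to cocycles. -/
noncomputable def Phi (N : ℕ) :
    groupCohomology.cocycles₂ (A N) →ₗ[ZMod 2] (Fin 3 → ZMod 2) :=
  (inv3 N).comp (groupCohomology.cocycles₂ (A N)).subtype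

lemma Phi_surj (n : ℕ) (hn : 1 ≤ n) : Function.Surjective (Phi (2 * n)) := by
  intro w
  have : NeZero (2 * n) := ⟨by omega⟩
  let uv : DihedralGroup (2 * n) × DihedralGroup (2 * n) → ZMod 2 := fun p => u n p.1 * v n p.2
  let vv : DihedralGroup (2 * n) × DihedralGroup (2 * n) → ZMod 2 := fun p => v n p.1 * v n p.2
  let c1 : groupCohomology.cocycles₂ (A (2 * n)) :=
    ⟨uv, (mem_cocycles _ _).2 (cup_isC _ _ (u_mul n) (v_mul n))⟩
  let c2 : groupCohomology.cocycles₂ (A (2 * n)) :=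
    ⟨vv, (mem_cocycles _ _).2 (cup_isC _ _ (v_mul n) (v_mul n))⟩
  let c3 : groupCohomology.cocycles₂ (A (2 * n)) :=
    ⟨carC (2 * n), (mem_cocycles _ _).2 (carC_isC _)⟩
  have hv1 : v n 1 = 0 := rfl
  have hu0 : u n (sr 0) = 0 := by simp only [u, map_zero]
  have hu1 : u n (sr 1) = 1 := by simp only [u, map_one]
  have hvs : ∀ i, v n (sr i) = 1 := fun _ => rfl
  have hvr : ∀ i, v n (r i) = 0 := fun _ => rfl
  have e1 : Phi (2 * n) c1 = ![0, 1, 0] := by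
    change ![uv (sr 0, sr 0) + uv (1, 1), uv (sr 1, sr 1) + uv (1, 1),
      ∑ j ∈ Finset.range (2 * n), uv (r (j : ZMod (2 * n)), r 1)] = _
    simp [uv, hv1, hu0, hu1, hvs, hvr]
  have e2 : Phi (2 * n) c2 = ![1, 1, 0] := by
    change ![vv (sr 0, sr 0) + vv (1, 1), vv (sr 1, sr 1) + vv (1, 1),
      ∑ j ∈ Finset.range (2 * n), vv (r (j : ZMod (2 * n)), r 1)] = _
    simp [vv, hv1, hvs, hvr]
  have e3 : Phi (2 * n) c3 = ![0, 0, 1] := by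
    change ![carC _ (sr 0, sr 0) + carC _ (1, 1), carC _ (sr 1, sr 1) + carC _ (1, 1),
      ∑ j ∈ Finset.range (2 * n), carC _ (r (j : ZMod (2 * n)), r 1)] = _
    rw [carC_sum _ (by omega), carC_one, carC_sr0, carC_sr1, add_zero]
  refine ⟨w 0 • c2 + (w 1 - w 0) • c1 + w 2 • c3, ?_⟩
  rw [map_add, map_add, map_smul, map_smul, map_smul, e1, e2, e3]
  ext i
  fin_cases i <;> simp

theorem finrank_H2 (n : ℕ) (hn : 1 ≤ n) :
    Module.finrank (ZMod 2) (groupCohomology (A (2 * n)) 2) = 3 := by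
  have hs : Function.Surjective (groupCohomology.H2π (A (2 * n))).hom :=
    (ModuleCat.epi_iff_surjective _).1 inferInstance
  have hk : LinearMap.ker (groupCohomology.H2π (A (2 * n))).hom = LinearMap.ker (Phi (2 * n)) := by
    ext x
    rw [LinearMap.mem_ker, LinearMap.mem_ker]
    refine (groupCohomology.H2π_eq_zero_iff x).trans ?_
    refine (mem_coboundaries _ _).trans ?_
    exact (inv3_eq_zero_iff n ((mem_cocycles _ _).1 x.2)).symm
  have e := (LinearMap.quotKerEquivOfSurjective _ hs).symm ≪≫ₗ
    Submodule.quotEquivOfEq _ _ hk ≪≫ₗ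
    LinearMap.quotKerEquivOfSurjective _ (Phi_surj n hn)
  rw [LinearEquiv.finrank_eq e]
  simp

theorem finrank_H0 (N : ℕ) :
    Module.finrank (ZMod 2) (groupCohomology (A N) 0) = 1 := by
  rw [LinearEquiv.finrank_eq (groupCohomology.H0IsoOfIsTrivial (A N)).toLinearEquiv]
  exact Module.finrank_self (ZMod 2)

/-- Evaluation of characters at the two generators. -/
noncomputable def ev (N : ℕ) :
    (Additive (DihedralGroup N) →+ ZMod 2) →ₗ[ZMod 2] (Fin 2 → ZMod 2) where
  toFun f := ![f (Additive.ofMul (r 1)), f (Additive.ofMul (sr 0))]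
  map_add' f g := by
    ext i; fin_cases i <;> simp
  map_smul' c f := by
    ext i; fin_cases i <;> simp

lemma ev_inj (N : ℕ) : Function.Injective (ev N) := by
  rw [← LinearMap.ker_eq_bot, LinearMap.ker_eq_bot']
  intro f hf
  have h0 : f (Additive.ofMul (r 1)) = 0 := congrFun hf 0
  have h1 : f (Additive.ofMul (sr 0)) = 0 := congrFun hf 1
  have hr : ∀ i, f (Additive.ofMul (r i)) = 0 := fun i => by
    obtain ⟨k, rfl⟩ := ZMod.intCast_surjective i
    rw [← r_one_zpow, ofMul_zpow, map_zsmul, h0, smul_zero]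
  ext g
  change f (Additive.ofMul g) = 0
  rcases g with i | i
  · exact hr i
  · have : sr i = sr 0 * r i := by simp
    rw [this, ofMul_mul, map_add, hr, h1, add_zero]

lemma ev_surj (n : ℕ) : Function.Surjective (ev (2 * n)) := by
  intro w
  let U : Additive (DihedralGroup (2 * n)) →+ ZMod 2 :=
    AddMonoidHom.mk' (fun g => u n g.toMul) (fun g h => u_mul n g.toMul h.toMul)
  let V : Additive (DihedralGroup (2 * n)) →+ ZMod 2 :=
    AddMonoidHom.mk' (fun g => v n g.toMul) (fun g h => v_mul n g.toMul h.toMul)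
  have hu0 : u n (sr 0) = 0 := by simp only [u, map_zero]
  have hu1 : u n (r 1) = 1 := by simp only [u, map_one]
  have e1 : ev (2 * n) U = ![1, 0] := by
    change ![u n (r 1), u n (sr 0)] = _
    rw [hu0, hu1]
  have e2 : ev (2 * n) V = ![0, 1] := rfl
  refine ⟨w 0 • U + w 1 • V, ?_⟩
  rw [map_add, map_smul, map_smul, e1, e2]
  ext i
  fin_cases i <;> simp

theorem finrank_H1 (n : ℕ) :
    Module.finrank (ZMod 2) (groupCohomology (A (2 * n)) 1) = 2 := by
  rw [LinearEquiv.finrank_eq (groupCohomology.H1IsoOfIsTrivial (A (2 * n))).toLinearEquiv]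
  have := LinearEquiv.finrank_eq (LinearEquiv.ofBijective (ev (2 * n)) ⟨ev_inj _, ev_surj n⟩)
  rw [Module.finrank_fin_fun] at this
  exact this

end DihCoh


/- `D_{4n}` is `DihedralGroup (2n)` (Mathlib's `DihedralGroup N` has order `2N`),
and `𝔽₂ = ZMod 2` with the trivial `D_{4n}`-action is `Rep.trivial (ZMod 2) _ (ZMod 2)`. -/

/-- The group cohomology of the dihedral group of order `4n` with coefficients in the
trivial module `𝔽₂` has `𝔽₂`-dimensions `1`, `2`, `3` in degrees `0`, `1`, `2`. -/
theorem cohomology_dihedral_F2 (n : ℕ) (hn : 1 ≤ n) :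
    Module.finrank (ZMod 2)
      (groupCohomology (Rep.trivial (ZMod 2) (DihedralGroup (2 * n)) (ZMod 2)) 0) = 1 ∧
    Module.finrank (ZMod 2)
      (groupCohomology (Rep.trivial (ZMod 2) (DihedralGroup (2 * n)) (ZMod 2)) 1) = 2 ∧
    Module.finrank (ZMod 2)
      (groupCohomology (Rep.trivial (ZMod 2) (DihedralGroup (2 * n)) (ZMod 2)) 2) = 3 := by
  exact ⟨DihCoh.finrank_H0 _, DihCoh.finrank_H1 n, DihCoh.finrank_H2 n hn⟩
end
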